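/- Let k be a field and let Q₁, Q₂, S be homogeneous degree-2 polynomials in k[u,v]. Setting P₁ = Q₂², P₂ = Q₁S, P₃ = Q₁Q₂, one has det A_{P₁,P₂,P₃} = Res(Q₁,Q₂)² · Res(S,Q₂). -/

import Mathlib

open MvPolynomial

noncomputable section

/-- The coefficient of `u^i v^j` in a polynomial in `k[u,v]`
(variables `X 0 = u`, `X 1 = v`). -/
def coeffUV {k : Type*} [Field k] (i j : ℕ) (P : MvPolynomial (Fin 2) k) : k :=
  MvPolynomial.coeff (Finsupp.single 0 i + Finsupp.single 1 j) P

/-- For homogeneous degree-4 polynomials `P₁, P₂, P₃` in `k[u,v]`, the `6×6` matrix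
whose columns are the coefficient vectors of `u·P₁, v·P₁, u·P₂, v·P₂, u·P₃, v·P₃`
with respect to the basis `u⁵, u⁴v, u³v², u²v³, uv⁴, v⁵`. -/
def Amat {k : Type*} [Field k] (P₁ P₂ P₃ : MvPolynomial (Fin 2) k) :
    Matrix (Fin 6) (Fin 6) k :=
  Matrix.of fun i j =>
    coeffUV (5 - (i : ℕ)) (i : ℕ)
      ((![X 0 * P₁, X 1 * P₁, X 0 * P₂, X 1 * P₂, X 0 * P₃, X 1 * P₃] :
          Fin 6 → MvPolynomial (Fin 2) k) j)

/-- The resultant of two binary quadratic forms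
`Q = q₂u² + q₁uv + q₀v²` and `Q' = q₂'u² + q₁'uv + q₀'v²`:
`(q₂q₀' − q₀q₂')² − (q₂q₁' − q₁q₂')(q₁q₀' − q₀q₁')`. -/
def Res2 {k : Type*} [Field k] (Q Q' : MvPolynomial (Fin 2) k) : k :=
  (coeffUV 2 0 Q * coeffUV 0 2 Q' - coeffUV 0 2 Q * coeffUV 2 0 Q') ^ 2 -
    (coeffUV 2 0 Q * coeffUV 1 1 Q' - coeffUV 1 1 Q * coeffUV 2 0 Q') *
      (coeffUV 1 1 Q * coeffUV 0 2 Q' - coeffUV 0 2 Q * coeffUV 1 1 Q')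

/-- The monomial `a u^i v^j`. -/
def monUV {k : Type*} [Field k] (i j : ℕ) (a : k) : MvPolynomial (Fin 2) k :=
  MvPolynomial.monomial (Finsupp.single 0 i + Finsupp.single 1 j) a

lemma expUV_inj (i j i' j' : ℕ) :
    ((Finsupp.single 0 i + Finsupp.single 1 j : Fin 2 →₀ ℕ) =
      Finsupp.single 0 i' + Finsupp.single 1 j') ↔ (i = i' ∧ j = j') := by
  constructor
  · intro h
    have h0 := DFunLike.congr_fun h 0
    have h1 := DFunLike.congr_fun h 1
    simp at h0 h1
    exact ⟨h0, h1⟩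
  · rintro ⟨rfl, rfl⟩; rfl

lemma coeffUV_mon {k : Type*} [Field k] (i j i' j' : ℕ) (a : k) :
    coeffUV i j (monUV i' j' a) = if i' = i ∧ j' = j then a else 0 := by
  classical
  simp only [coeffUV, monUV, coeff_monomial, expUV_inj]

lemma coeffUV_add {k : Type*} [Field k] (i j : ℕ) (P Q : MvPolynomial (Fin 2) k) :
    coeffUV i j (P + Q) = coeffUV i j P + coeffUV i j Q := by
  simp [coeffUV]

lemma mon_mul {k : Type*} [Field k] (i j i' j' : ℕ) (a b : k) :
    monUV i j a * monUV i' j' b = monUV (i + i') (j + j') (a * b) := by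
  simp only [monUV, monomial_mul, Finsupp.single_add]
  congr 1
  congr 1
  abel

lemma X0_eq {k : Type*} [Field k] : (X 0 : MvPolynomial (Fin 2) k) = monUV 1 0 1 := by
  simp [monUV, X]

lemma X1_eq {k : Type*} [Field k] : (X 1 : MvPolynomial (Fin 2) k) = monUV 0 1 1 := by
  simp [monUV, X]

lemma quad_eq {k : Type*} [Field k] (Q : MvPolynomial (Fin 2) k) (h : Q.IsHomogeneous 2) :
    ∃ a b c : k, Q = monUV 2 0 a + monUV 1 1 b + monUV 0 2 c := by
  refine ⟨coeffUV 2 0 Q, coeffUV 1 1 Q, coeffUV 0 2 Q, ?_⟩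
  ext d
  have hd : d = Finsupp.single 0 (d 0) + Finsupp.single 1 (d 1) := by
    ext i; fin_cases i <;> simp
  generalize d 0 = i at hd
  generalize d 1 = j at hd
  subst hd
  change coeffUV i j Q = coeffUV i j _
  simp only [coeffUV_add, coeffUV_mon]
  by_cases hij : i + j = 2
  · have : (i = 0 ∧ j = 2) ∨ (i = 1 ∧ j = 1) ∨ (i = 2 ∧ j = 0) := by omega
    rcases this with ⟨rfl, rfl⟩ | ⟨rfl, rfl⟩ | ⟨rfl, rfl⟩ <;> simp
  · have h0 : coeffUV i j Q = 0 := by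
      apply h.coeff_eq_zero
      simpa [map_add, Finsupp.degree_single] using hij
    rw [h0, if_neg (by omega), if_neg (by omega), if_neg (by omega)]
    simp

lemma det_aux {k : Type*} [Field k] (a b c d e f x y z : k) :
    (!![d*d, 0, a*x, 0, a*d, 0;
        2*d*e, d*d, a*y+b*x, a*x, a*e+b*d, a*d;
        2*d*f+e*e, 2*d*e, a*z+b*y+c*x, a*y+b*x, a*f+b*e+c*d, a*e+b*d;
        2*e*f, 2*d*f+e*e, b*z+c*y, a*z+b*y+c*x, b*f+c*e, a*f+b*e+c*d;
        f*f, 2*e*f, c*z, b*z+c*y, c*f, b*f+c*e;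
        0, f*f, 0, c*z, 0, c*f] : Matrix (Fin 6) (Fin 6) k).det =
    ((a*f-c*d)^2-(a*e-b*d)*(b*f-c*e))^2 * ((x*f-z*d)^2-(x*e-y*d)*(y*f-z*e)) := by
  simp [Matrix.det_succ_row_zero, Fin.sum_univ_succ, Fin.succAbove]
  ring

/-- tacnode case: for homogeneous degree-2 polynomials `Q₁, Q₂, S`
in `k[u,v]`, with `P₁ = Q₂²`, `P₂ = Q₁S`, `P₃ = Q₁Q₂`, one has
`det A_{P₁,P₂,P₃} = Res(Q₁,Q₂)² · Res(S,Q₂)`. -/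
theorem stmt3 {k : Type*} [Field k] (Q₁ Q₂ S : MvPolynomial (Fin 2) k)
    (h₁ : Q₁.IsHomogeneous 2) (h₂ : Q₂.IsHomogeneous 2) (hS : S.IsHomogeneous 2) :
    (Amat (Q₂ ^ 2) (Q₁ * S) (Q₁ * Q₂)).det = Res2 Q₁ Q₂ ^ 2 * Res2 S Q₂ := by
  obtain ⟨a, b, c, rfl⟩ := quad_eq Q₁ h₁
  obtain ⟨d, e, f, rfl⟩ := quad_eq Q₂ h₂
  obtain ⟨x, y, z, rfl⟩ := quad_eq S hS
  have hR : ∀ a b c d e f : k, Res2 (monUV 2 0 a + monUV 1 1 b + monUV 0 2 c)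
      (monUV 2 0 d + monUV 1 1 e + monUV 0 2 f) =
      (a*f-c*d)^2-(a*e-b*d)*(b*f-c*e) := by
    intros
    simp [Res2, coeffUV_add, coeffUV_mon]
  rw [hR, hR, ← det_aux]
  congr 1
  ext i j
  fin_cases i <;> fin_cases j <;>
    simp [Amat, X0_eq, X1_eq, pow_two, mul_add, add_mul, mon_mul, coeffUV_add, coeffUV_mon] <;>
    ring
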